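/- arXiv:2212.07012 — 2 statements merged into one kernel-verified Lean document; each statement's English description precedes it below -/
import Mathlib

section
/- Argument-principle mapping theorem for Jordan regions (bounded case): let U, V ⊆ ℂ be compact sets each homeomorphic to the closed unit disk, and let f : ℂ → ℂ be continuous on U and complex analytic on the interior of U. Suppose the restriction of f to the frontier of U is a homeomorphism from the frontier of U onto the frontier of V. Then f restricted to U is a homeomorphism from U onto V; in particular, f is injective on U, f(U) = V, and f maps the interior of U biholomorphically onto the interior of V. -/
/-!
The classical proof counts solutions of `f z = w` by the argument principle. Here winding numbers
are replaced by the question of when a nonvanishing continuous function has a continuous logarithm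
or an `n`-th root, so that no regularity of the frontier is needed.

The basic tools are homotopy lifting through `exp` (`exists_log_of_homotopy`) and the fact that
`z - a` has no continuous `n`-th root, `n ≥ 2`, on a circle about `a` (`no_root_on_sphere`). They
show that a topological disk `U` with parametrization `φ` has interior `φ (open disk)` and frontier
`φ (unit circle)` (`DiskChart.mem_interior`, `DiskChart.not_mem_interior`), that `U` does not
separate the plane (`not_mem_of_frontier_subset`), and that its frontier winds exactly once around
each interior point, in the sense that `z - w` has no `n`-th root there for `n ≥ 2`
(`DiskChart.no_root_on_frontier`).

For the theorem itself, `f` is open on the interior of `U`. The part of `f(U)` outside `V` is thus a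
bounded open set with frontier in `V`, hence empty; and `f (interior U)` is open and relatively
closed in the connected set `interior V`, hence equal to it. For `w ∈ interior V` divide out the
finitely many zeros of `f - w`, so that `f - w = ∏ (z - aᵢ) * h` with `n` factors and `h`
nonvanishing on `U`. On the frontier of `U` each `z - aᵢ` agrees with `z - a₁` up to an exponential,
and `h` is an exponential, so `f - w` is an `n`-th power there. Transporting by the boundary
homeomorphism, `z - w` is an `n`-th power on the frontier of `V`, which forces `n = 1`
(`exists_simple_factor`). Hence `f` is injective with nonzero derivative on the interior.
-/

open Set Metric Filter Topology

namespace JordanRegion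

/-! ### Logarithms and roots of nonvanishing functions -/

/-- `g` has a continuous logarithm on `A`; in particular `g` does not vanish on `A`. -/
def HasLog {X : Type*} [TopologicalSpace X] (g : X → ℂ) (A : Set X) : Prop :=
  ∃ L : X → ℂ, ContinuousOn L A ∧ ∀ x ∈ A, g x = Complex.exp (L x)

/-- Homotopy lifting through the covering `exp : ℂ → ℂ \ {0}`: homotopic nonvanishing functions
differ by a factor that has a continuous logarithm. -/
lemma exists_log_of_homotopy {X : Type*} [TopologicalSpace X] {A : Set X} {H : ℝ → X → ℂ}
    (hc : ContinuousOn (fun p : ℝ × X => H p.1 p.2) (Icc 0 1 ×ˢ A))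
    (h0 : ∀ t ∈ Icc (0 : ℝ) 1, ∀ x ∈ A, H t x ≠ 0) :
    ∃ L : X → ℂ, ContinuousOn L A ∧ ∀ x ∈ A, H 1 x = H 0 x * Complex.exp (L x) := by
  classical
  have mem0 : (0 : ℝ) ∈ Icc (0 : ℝ) 1 := by simp
  have mem1 : (1 : ℝ) ∈ Icc (0 : ℝ) 1 := by simp
  have hcont : Continuous (fun p : unitInterval × A => H p.1 p.2) := by
    refine hc.comp_continuous (f := fun p : unitInterval × A => ((p.1 : ℝ), (p.2 : X)))
      (by fun_prop) ?_
    exact fun p => ⟨p.1.2, p.2.2⟩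
  have hcont0 : Continuous (fun p : unitInterval × A => H 0 p.2) := by
    have := hcont.comp (f := fun p : unitInterval × A => ((0 : unitInterval), p.2)) (by fun_prop)
    exact this
  let K : C(unitInterval × A, {z : ℂ // z ≠ 0}) :=
    ⟨fun p => ⟨H p.1 p.2 / H 0 p.2, div_ne_zero (h0 _ p.1.2 _ p.2.2) (h0 _ mem0 _ p.2.2)⟩,
      Continuous.subtype_mk (hcont.div hcont0 fun p => h0 _ mem0 _ p.2.2) _⟩
  have K0 : ∀ a : A, K (0, a) =
      (fun z : ℂ ↦ (⟨_, z.exp_ne_zero⟩ : {z : ℂ // z ≠ 0})) ((ContinuousMap.const A (0 : ℂ)) a) := by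
    intro a
    ext
    simp [K, div_self (h0 0 mem0 a a.2)]
  let F := Complex.isCoveringMap_exp.liftHomotopy K (ContinuousMap.const A (0 : ℂ)) K0
  have hF := Complex.isCoveringMap_exp.liftHomotopy_lifts K (ContinuousMap.const A (0 : ℂ)) K0
  refine ⟨fun x => if hx : x ∈ A then F (1, ⟨x, hx⟩) else 0, ?_, ?_⟩
  · rw [continuousOn_iff_continuous_domRestrict]
    have : Continuous fun a : A => F (1, a) := by fun_prop
    convert this using 1
    ext a
    simp
  · intro x hx
    have h1 := congrArg Subtype.val (congrFun hF (1, ⟨x, hx⟩))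
    simp only [Function.comp_apply] at h1
    simp only [hx, dite_true]
    change Complex.exp (F (1, ⟨x, hx⟩)) = H 1 x / H 0 x at h1
    rw [h1, mul_div_cancel₀ _ (h0 0 mem0 x hx)]

lemma hasLog_of_starConvex {E : Type*} [AddCommGroup E] [Module ℝ E] [TopologicalSpace E]
    [ContinuousAdd E] [ContinuousSMul ℝ E] {C : Set E} {a : E} (ha : a ∈ C)
    (hC : StarConvex ℝ a C) {g : E → ℂ} (hg : ContinuousOn g C) (h0 : ∀ x ∈ C, g x ≠ 0) :
    HasLog g C := by
  have hmem : ∀ t ∈ Icc (0 : ℝ) 1, ∀ x ∈ C, (1 - t) • a + t • x ∈ C := fun t ht x hx =>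
    hC hx (by linarith [ht.2]) ht.1 (by ring)
  obtain ⟨L, hL, hL'⟩ := exists_log_of_homotopy (A := C)
    (H := fun t x => g ((1 - t) • a + t • x))
    (hg.comp (f := fun p : ℝ × E => (1 - p.1) • a + p.1 • p.2)
      (by fun_prop) fun p hp => hmem _ hp.1 _ hp.2)
    fun t ht x hx => h0 _ (hmem t ht x hx)
  refine ⟨fun x => Complex.log (g a) + L x, by fun_prop, fun x hx => ?_⟩
  have := hL' x hx
  simp only [sub_self, zero_smul, one_smul, zero_add, sub_zero, add_zero] at this
  rw [this, Complex.exp_add, Complex.exp_log (h0 a ha)]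

lemma HasLog.mono {X : Type*} [TopologicalSpace X] {g : X → ℂ} {A B : Set X} (h : HasLog g A)
    (hBA : B ⊆ A) : HasLog g B :=
  let ⟨L, hL, hL'⟩ := h
  ⟨L, hL.mono hBA, fun x hx => hL' x (hBA hx)⟩

lemma HasLog.comp {X Y : Type*} [TopologicalSpace X] [TopologicalSpace Y] {g : X → ℂ} {A : Set X}
    {B : Set Y} (h : HasLog g A) {u : Y → X} (hu : ContinuousOn u B) (hm : MapsTo u B A) :
    HasLog (g ∘ u) B :=
  let ⟨L, hL, hL'⟩ := h
  ⟨L ∘ u, hL.comp hu hm, fun _ hx => hL' _ (hm hx)⟩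

/-- The identity has winding number one about the centre of a circle, so it has no `n`-th root
there for `n ≥ 2`. -/
lemma no_root_on_sphere {a : ℂ} {R : ℝ} (hR : 0 < R) {n : ℕ} (hn : 2 ≤ n) {r : ℂ → ℂ}
    (hr : ContinuousOn r (sphere a R)) (h : ∀ z ∈ sphere a R, z - a = r z ^ n) : False := by
  have hn0 : n ≠ 0 := by omega
  have hnC : (n : ℂ) ≠ 0 := by exact_mod_cast hn0
  let e : ℝ → ℂ := fun x => a + R * Complex.exp (x * Complex.I)
  have he : ∀ x, e x ∈ sphere a R := fun x => by
    simp [e, Complex.norm_exp_ofReal_mul_I, abs_of_pos hR]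
  let q : ℝ → ℂ := fun x => r (e x) / Complex.exp (x * Complex.I / n)
  have hq : Continuous q := by
    refine Continuous.div (hr.comp_continuous (by fun_prop) he) (by fun_prop)
      fun x => Complex.exp_ne_zero _
  have hqn : ∀ x, q x ^ n = R := fun x => by
    have h1 := h _ (he x)
    simp only [q, div_pow, ← Complex.exp_nat_mul]
    rw [← h1, mul_div_cancel₀ _ hnC]
    simp [e]
  -- the values of `q` lie in the finite set of `n`-th roots of `R`, hence `q` is constant
  have hfin : {z : ℂ | z ^ n = R}.Finite := by
    have := (Polynomial.nthRoots n (R : ℂ)).toFinset.finite_toSet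
    refine this.subset fun z hz => ?_
    simpa [Polynomial.mem_nthRoots (Nat.pos_of_ne_zero hn0)] using hz
  have hconst : q 0 = q (2 * Real.pi) := by
    have hpre : IsPreconnected (range q) := isPreconnected_range hq
    have hs : (range q).Subsingleton := by
      refine (hfin.subset ?_).countable.isTotallyDisconnected _ subset_rfl hpre
      rintro _ ⟨x, rfl⟩
      exact hqn x
    exact hs ⟨_, rfl⟩ ⟨_, rfl⟩
  have hq0 : q 0 ≠ 0 := by
    intro h0
    have := hqn 0
    rw [h0, zero_pow hn0] at this
    exact hR.ne (by exact_mod_cast this)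
  have hee : e (2 * Real.pi) = e 0 := by simp [e]
  have h2 : Complex.exp (2 * Real.pi * Complex.I / n) = 1 := by
    simp only [q, hee] at hconst hq0
    simp only [Complex.ofReal_zero, zero_mul, zero_div, Complex.exp_zero, div_one] at hconst hq0
    rw [eq_div_iff (Complex.exp_ne_zero _)] at hconst
    have := mul_left_cancel₀ hq0 (hconst.trans (mul_one _).symm)
    simpa using this
  rw [Complex.exp_eq_one_iff] at h2
  obtain ⟨k, hk⟩ := h2
  have hpi : (2 * Real.pi * Complex.I : ℂ) ≠ 0 := Complex.two_pi_I_ne_zero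
  have hk' : (k : ℂ) * n = 1 := by
    rw [div_eq_iff hnC] at hk
    have : (2 * Real.pi * Complex.I : ℂ) * (k * n) = 2 * Real.pi * Complex.I * 1 := by
      rw [mul_one]; linear_combination -hk
    exact mul_left_cancel₀ hpi this
  have hk2 : k * (n : ℤ) = 1 := by exact_mod_cast hk'
  have := Int.isUnit_iff.1 (IsUnit.of_mul_eq_one_right k hk2)
  omega

lemma no_log_on_sphere {a : ℂ} {R : ℝ} (hR : 0 < R) (h : HasLog (fun z => z - a) (sphere a R)) :
    False := by
  obtain ⟨L, hL, hL'⟩ := h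
  refine no_root_on_sphere hR le_rfl (r := fun z => Complex.exp (L z / 2)) (by fun_prop) ?_
  intro z hz
  have := hL' z hz
  simp only at this
  rw [this, ← Complex.exp_nat_mul, Nat.cast_ofNat, mul_div_cancel₀ _ two_ne_zero]

lemma exists_extension {X : Type*} [TopologicalSpace X] [NormalSpace X] {A : Set X}
    (hA : IsClosed A) {g : X → ℂ} (hg : ContinuousOn g A) :
    ∃ G : X → ℂ, Continuous G ∧ EqOn G g A := by
  obtain ⟨G, hG⟩ := ContinuousMap.exists_restrict_eq hA
    ⟨A.domRestrict g, continuousOn_iff_continuous_domRestrict.1 hg⟩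
  exact ⟨G, G.continuous, fun x hx => congrArg (fun F : C(A, ℂ) => F ⟨x, hx⟩) hG⟩

/-- If `z - w` has a logarithm on the closed set `K`, then `w` is not in a bounded set whose
frontier lies in `K`: otherwise extending the logarithm into that set would produce a
nonvanishing function on `ℂ` equal to `z - w` near infinity. -/
lemma not_mem_of_frontier_subset {K O : Set ℂ} (hK : IsClosed K)
    (hb : Bornology.IsBounded O) (hfr : frontier O ⊆ K) {w : ℂ} (hw : w ∈ O)
    (hlog : HasLog (fun z => z - w) K) : False := by
  classical
  obtain ⟨L, hL, hL'⟩ := hlog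
  obtain ⟨G, hG, hGL⟩ := exists_extension hK hL
  let h : ℂ → ℂ := O.piecewise (fun z => Complex.exp (G z)) (fun z => z - w)
  have hh : Continuous h := by
    refine Continuous.piecewise (fun z hz => ?_) (by fun_prop) (by fun_prop)
    rw [hGL (hfr hz), ← hL' z (hfr hz)]
  have hh0 : ∀ z, h z ≠ 0 := by
    intro z
    by_cases hz : z ∈ O
    · simp [h, hz, Complex.exp_ne_zero]
    · simp only [h, hz, not_false_eq_true, piecewise_eq_of_notMem]
      intro h0
      exact hz (sub_eq_zero.1 h0 ▸ hw)
  obtain ⟨R, hR⟩ := hb.subset_ball w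
  have hRpos : 0 < R := by simpa using pos_of_mem_ball (hR hw)
  have hlog' := hasLog_of_starConvex (mem_univ (0 : ℂ)) (starConvex_univ 0) hh.continuousOn
    (fun x _ => hh0 x)
  obtain ⟨M, hM, hM'⟩ := hlog'.mono (subset_univ (sphere w R))
  refine no_log_on_sphere hRpos ⟨M, hM, fun z hz => ?_⟩
  have hzO : z ∉ O := fun hzO => by
    have := mem_ball.1 (hR hzO)
    rw [mem_sphere.1 hz] at this
    exact lt_irrefl _ this
  simpa [h, hzO] using hM' z hz

/-- A nonvanishing function on a closed subset of the line has a logarithm: extend it to a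
complex-valued function on the line and take a logarithm on every component of the open set where
the extension does not vanish. -/
lemma hasLog_of_isClosed_real {A : Set ℝ} (hA : IsClosed A) {g : ℝ → ℂ} (hg : ContinuousOn g A)
    (h0 : ∀ x ∈ A, g x ≠ 0) : HasLog g A := by
  obtain ⟨G, hG, hGg⟩ := exists_extension hA hg
  let O : Set ℝ := {x | G x ≠ 0}
  have hO : IsOpen O := isOpen_ne_fun hG continuous_const
  have hcomp : ∀ x ∈ O, HasLog G (connectedComponentIn O x) := fun x hx =>
    hasLog_of_starConvex (mem_connectedComponentIn hx)
      (isPreconnected_connectedComponentIn.ordConnected.convex.starConvex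
        (mem_connectedComponentIn hx)) hG.continuousOn
      fun y hy => connectedComponentIn_subset O x hy
  have hset : ∀ C : Set ℝ, ∃ L : ℝ → ℂ, (∃ x ∈ O, C = connectedComponentIn O x) →
      ContinuousOn L C ∧ ∀ x ∈ C, G x = Complex.exp (L x) := by
    intro C
    by_cases hC : ∃ x ∈ O, C = connectedComponentIn O x
    · obtain ⟨x, hx, rfl⟩ := hC
      obtain ⟨L, hL⟩ := hcomp x hx
      exact ⟨L, fun _ => hL⟩
    · exact ⟨0, fun h => absurd h hC⟩
  choose L hL using hset
  have hAO : A ⊆ O := fun x hx => by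
    change G x ≠ 0
    rw [hGg hx]
    exact h0 x hx
  refine ⟨fun x => L (connectedComponentIn O x) x, fun x hx => ?_, fun x hx => ?_⟩
  · have hxO := hAO hx
    have hn : connectedComponentIn O x ∈ 𝓝 x :=
      hO.connectedComponentIn.mem_nhds (mem_connectedComponentIn hxO)
    refine ContinuousAt.continuousWithinAt ?_
    refine (((hL _ ⟨x, hxO, rfl⟩).1).continuousAt hn).congr ?_
    filter_upwards [hn] with y hy
    rw [connectedComponentIn_eq hy]
  · rw [← hGg hx]
    exact (hL _ ⟨x, hAO hx, rfl⟩).2 x (mem_connectedComponentIn (hAO hx))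

/-- A nonvanishing function on a closed subset `A` of a circle extends to a nonvanishing function
on the circle: a proper subset can be cut open into a subset of the line. -/
lemma exists_nonvanishing_extension_sphere {a : ℂ} {R : ℝ} (hR : 0 < R) {A : Set ℂ}
    (hA : IsClosed A) (hAs : A ⊆ sphere a R) {g : ℂ → ℂ} (hg : ContinuousOn g A)
    (h0 : ∀ z ∈ A, g z ≠ 0) :
    ∃ G : ℂ → ℂ, ContinuousOn G (sphere a R) ∧ (∀ z ∈ sphere a R, G z ≠ 0) ∧ EqOn G g A := by
  by_cases hall : sphere a R ⊆ A
  · exact ⟨g, hg.mono hall, fun z hz => h0 z (hall hz), fun _ _ => rfl⟩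
  obtain ⟨p, hp, hpA⟩ := not_subset.1 hall
  have hpa : p - a ≠ 0 := by
    intro h
    rw [sub_eq_zero.1 h, mem_sphere, dist_self] at hp
    exact hR.ne hp
  have hnp : ‖p - a‖ = R := by simpa [dist_eq_norm] using hp
  let e : ℝ → ℂ := fun x => a - (p - a) * Complex.exp (x * Complex.I)
  let k : ℂ → ℝ := fun z => Complex.arg (-(z - a) / (p - a))
  have he : Continuous e := by fun_prop
  have hke : ∀ z ∈ sphere a R, e (k z) = z := by
    intro z hz
    have hnz : ‖z - a‖ = R := by simpa [dist_eq_norm] using hz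
    have h1 : ‖-(z - a) / (p - a)‖ = 1 := by
      rw [norm_div, norm_neg, hnz, hnp, div_self hR.ne']
    have := Complex.norm_mul_exp_arg_mul_I (-(z - a) / (p - a))
    rw [h1, Complex.ofReal_one, one_mul] at this
    simp only [e, k, this]
    field_simp
    ring
  have hslit : ∀ z ∈ A, -(z - a) / (p - a) ∈ Complex.slitPlane := by
    intro z hz
    rw [Complex.mem_slitPlane_iff_arg]
    have hk := hke z (hAs hz)
    have hnz : ‖z - a‖ = R := by simpa [dist_eq_norm] using hAs hz
    refine ⟨fun h => ?_, ?_⟩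
    · simp only [e, k, h, Complex.exp_pi_mul_I] at hk
      apply hpA
      convert hz using 1
      rw [← hk]
      ring
    · refine div_ne_zero (neg_ne_zero.2 ?_) hpa
      rw [← norm_ne_zero_iff, hnz]
      exact hR.ne'
  have hkc : ContinuousOn k A := fun z hz =>
    ((Complex.continuousAt_arg (hslit z hz)).comp_continuousWithinAt
      (f := fun z => -(z - a) / (p - a)) (by fun_prop))
  have hlogR : HasLog (g ∘ e) (e ⁻¹' A) := hasLog_of_isClosed_real (hA.preimage he)
    (hg.comp he.continuousOn fun x hx => hx) fun x hx => h0 _ hx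
  obtain ⟨L, hL, hL'⟩ := hlogR.comp hkc fun z hz => by
    rw [mem_preimage, hke z (hAs hz)]
    exact hz
  obtain ⟨M, hM, hML⟩ := exists_extension hA hL
  refine ⟨fun z => Complex.exp (M z), by fun_prop, fun z _ => Complex.exp_ne_zero _, ?_⟩
  intro z hz
  have := hL' z hz
  simp only [Function.comp_apply, hke z (hAs hz)] at this
  simp only [hML hz, this]

/-! ### Topological disks in the plane -/

/-- `φ` and `ψ` restrict to mutually inverse homeomorphisms between the closed unit disk
and `U`; outside these sets their values are irrelevant. -/
structure DiskChart (φ ψ : ℂ → ℂ) (U : Set ℂ) : Prop where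
  cont : ContinuousOn φ (closedBall 0 1)
  maps : MapsTo φ (closedBall 0 1) U
  cont_inv : ContinuousOn ψ U
  maps_inv : MapsTo ψ U (closedBall 0 1)
  left : ∀ z ∈ closedBall (0 : ℂ) 1, ψ (φ z) = z
  right : ∀ z ∈ U, φ (ψ z) = z

lemma exists_diskChart {U : Set ℂ} (h : Nonempty (closedBall (0 : ℂ) 1 ≃ₜ U)) :
    ∃ φ ψ, DiskChart φ ψ U := by
  classical
  obtain ⟨e⟩ := h
  refine ⟨fun z => if hz : z ∈ closedBall (0 : ℂ) 1 then e ⟨z, hz⟩ else 0,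
    fun z => if hz : z ∈ U then e.symm ⟨z, hz⟩ else 0, ?_, ?_, ?_, ?_, ?_, ?_⟩
  · rw [continuousOn_iff_continuous_domRestrict]
    have : Continuous fun z => (e z : ℂ) := by fun_prop
    convert this using 1
    ext z
    simp only [domRestrict_apply, z.2, dite_true]
  · intro z hz
    simp only [hz, dite_true]
    exact (e ⟨z, hz⟩).2
  · rw [continuousOn_iff_continuous_domRestrict]
    have : Continuous fun z => (e.symm z : ℂ) := by fun_prop
    convert this using 1
    ext z
    simp only [domRestrict_apply, z.2, dite_true]
  · intro z hz
    simp only [hz, dite_true]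
    exact (e.symm ⟨z, hz⟩).2
  · intro z hz
    simp only [hz, dite_true, Subtype.coe_prop, Subtype.coe_eta, Homeomorph.symm_apply_apply]
  · intro z hz
    simp only [hz, dite_true, Subtype.coe_prop, Subtype.coe_eta, Homeomorph.apply_symm_apply]

namespace DiskChart

variable {φ ψ : ℂ → ℂ} {U : Set ℂ}

lemma injOn (hφ : DiskChart φ ψ U) : InjOn φ (closedBall 0 1) := fun x hx y hy h => by
  rw [← hφ.left x hx, ← hφ.left y hy, h]

lemma image_eq (hφ : DiskChart φ ψ U) : φ '' closedBall 0 1 = U :=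
  Subset.antisymm hφ.maps.image_subset fun z hz => ⟨ψ z, hφ.maps_inv hz, hφ.right z hz⟩

lemma isCompact (hφ : DiskChart φ ψ U) : IsCompact U :=
  hφ.image_eq ▸ (isCompact_closedBall 0 1).image_of_continuousOn hφ.cont

/-- Nonvanishing functions on a topological disk have logarithms. -/
lemma hasLog (hφ : DiskChart φ ψ U) {g : ℂ → ℂ} (hg : ContinuousOn g U) (h0 : ∀ z ∈ U, g z ≠ 0) :
    HasLog g U := by
  have h1 : HasLog (g ∘ φ) (closedBall 0 1) :=
    hasLog_of_starConvex (a := 0) (by simp) ((convex_closedBall 0 1).starConvex (by simp))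
      (hg.comp hφ.cont hφ.maps) fun z hz => h0 _ (hφ.maps hz)
  obtain ⟨L, hL, hL'⟩ := h1.comp hφ.cont_inv hφ.maps_inv
  refine ⟨L, hL, fun z hz => ?_⟩
  rw [← hL' z hz, Function.comp_apply, Function.comp_apply, hφ.right z hz]

/-- The disk minus a boundary point is star-shaped, so `z - φ s` has a logarithm on `U \ {φ s}`;
this is impossible on a small circle around an interior point. -/
lemma not_mem_interior (hφ : DiskChart φ ψ U) {s : ℂ} (hs : ‖s‖ = 1) : φ s ∉ interior U := by
  intro hmemInt
  have hsD : s ∈ closedBall (0 : ℂ) 1 := by simp [hs]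
  have hs0 : s ≠ 0 := by
    rintro rfl
    simp at hs
  have hstar : StarConvex ℝ 0 (closedBall (0 : ℂ) 1 \ {s}) := by
    rw [starConvex_zero_iff]
    rintro x ⟨hx, hxs⟩ t ht0 ht1
    have hx1 : ‖x‖ ≤ 1 := by simpa using hx
    refine ⟨?_, fun h => ?_⟩
    · rw [mem_closedBall_zero_iff, norm_smul, Real.norm_of_nonneg ht0]
      exact mul_le_one₀ ht1 (norm_nonneg _) hx1
    · have h' : t • x = s := h
      have hn : t * ‖x‖ = 1 := by rw [← hs, ← h', norm_smul, Real.norm_of_nonneg ht0]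
      have ht : t = 1 := by nlinarith [norm_nonneg x]
      rw [ht, one_smul] at h'
      exact hxs h'
  have h1 : HasLog (fun z => φ z - φ s) (closedBall (0 : ℂ) 1 \ {s}) := by
    refine hasLog_of_starConvex (C := closedBall (0 : ℂ) 1 \ {s}) (a := 0) ⟨by simp, hs0.symm⟩ hstar
      ((hφ.cont.mono sdiff_subset).sub continuousOn_const) ?_
    rintro z ⟨hz, hzs⟩ h
    exact hzs (hφ.injOn hz hsD (sub_eq_zero.1 h))
  obtain ⟨ε, hε, hball⟩ := nhds_basis_closedBall.mem_iff.1 (mem_interior_iff_mem_nhds.1 hmemInt)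
  have hsub : sphere (φ s) ε ⊆ U := sphere_subset_closedBall.trans hball
  have hψ : MapsTo ψ (sphere (φ s) ε) (closedBall (0 : ℂ) 1 \ {s}) := fun z hz =>
    ⟨hφ.maps_inv (hsub hz), fun h => by
      have h2 : z = φ s := by rw [← hφ.right z (hsub hz), mem_singleton_iff.1 h]
      rw [h2, mem_sphere, dist_self] at hz
      exact hε.ne hz⟩
  obtain ⟨L, hL, hL'⟩ := h1.comp (hφ.cont_inv.mono hsub) hψ
  refine no_log_on_sphere hε ⟨L, hL, fun z hz => ?_⟩
  have := hL' z hz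
  simpa only [Function.comp_apply, hφ.right z (hsub hz)] using this

/-- Invariance of domain for the open disk. If `φ c` were not interior, then from a nearby
point `p` outside `U` the part of `U` close to `p` can be projected radially onto a small circle,
and `ψ - c` can be modified there to a function without zeros on `U`. This would give a
logarithm of `z - c` on a circle around `c`. -/
lemma mem_interior (hφ : DiskChart φ ψ U) {c : ℂ} (hc : ‖c‖ < 1) : φ c ∈ interior U := by
  classical
  by_contra hmemInt
  have hcD : c ∈ closedBall (0 : ℂ) 1 := by simp [hc.le]
  have hr : 0 < 1 - ‖c‖ := by linarith
  have hsD : sphere c (1 - ‖c‖) ⊆ closedBall (0 : ℂ) 1 := by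
    intro z hz
    have h1 : ‖z - c‖ = 1 - ‖c‖ := by simpa [dist_eq_norm] using hz
    have h2 : ‖z‖ ≤ ‖z - c‖ + ‖c‖ := by simpa using norm_add_le (z - c) c
    rw [mem_closedBall_zero_iff]
    linarith
  have hKc : IsClosed (φ '' sphere c (1 - ‖c‖)) :=
    ((isCompact_sphere c _).image_of_continuousOn (hφ.cont.mono hsD)).isClosed
  have hwK : φ c ∉ φ '' sphere c (1 - ‖c‖) := by
    rintro ⟨z, hz, h⟩
    rw [hφ.injOn (hsD hz) hcD h, mem_sphere, dist_self] at hz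
    exact hr.ne hz
  obtain ⟨η, hη, hball⟩ := Metric.isOpen_iff.1 hKc.isOpen_compl _ hwK
  obtain ⟨p, hpU, hpη⟩ : ∃ p ∉ U, dist p (φ c) < η / 2 := by
    by_contra hcon
    push Not at hcon
    refine hmemInt (_root_.mem_interior.2 ⟨ball (φ c) (η / 2), fun p hp => ?_, isOpen_ball,
      mem_ball_self (half_pos hη)⟩)
    by_contra hpU
    exact absurd (mem_ball.1 hp) (not_lt.2 (hcon p hpU))
  have hε : 0 < η / 2 := half_pos hη
  have hne : ∀ z ∈ U, η / 2 ≤ dist z p → ψ z - c ≠ 0 := by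
    intro z hz hd h
    rw [← hφ.right z hz, sub_eq_zero.1 h, dist_comm] at hd
    linarith
  have hUcl := hφ.isCompact.isClosed
  obtain ⟨G, hG, hG0, hGψ⟩ := exists_nonvanishing_extension_sphere (a := p) (R := η / 2) hε
    (A := U ∩ sphere p (η / 2)) (hUcl.inter isClosed_sphere) inter_subset_right
    (g := fun z => ψ z - c) ((hφ.cont_inv.mono inter_subset_left).sub continuousOn_const)
    (fun z hz => hne z hz.1 (mem_sphere.1 hz.2).ge)
  -- radial projection to the circle of radius `η / 2` about `p`
  let ρ : ℂ → ℂ := fun z => p + ((η / 2 / ‖z - p‖ : ℝ) : ℂ) * (z - p)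
  have hpne : ∀ z ∈ U, ‖z - p‖ ≠ 0 := fun z hz h =>
    hpU (sub_eq_zero.1 (norm_eq_zero.1 h) ▸ hz)
  have hρ : ContinuousOn ρ U := by
    refine continuousOn_const.add (ContinuousOn.mul ?_ (by fun_prop))
    refine Complex.continuous_ofReal.comp_continuousOn ?_
    exact continuousOn_const.div (by fun_prop) hpne
  have hρs : ∀ z ∈ U, ρ z ∈ sphere p (η / 2) := by
    intro z hz
    have := hpne z hz
    simp only [ρ, mem_sphere, dist_eq_norm, add_sub_cancel_left, norm_mul, Complex.norm_real]
    rw [Real.norm_of_nonneg (by positivity)]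
    field_simp
  have hρid : ∀ z ∈ sphere p (η / 2), ρ z = z := by
    intro z hz
    have : ‖z - p‖ = η / 2 := by simpa [dist_eq_norm] using hz
    simp only [ρ, this, div_self hε.ne', Complex.ofReal_one, one_mul, add_sub_cancel]
  let g : ℂ → ℂ := fun z => if dist z p ≤ η / 2 then G (ρ z) else ψ z - c
  have hgc : ContinuousOn g U := by
    have hcl1 : IsClosed {z : ℂ | dist z p ≤ η / 2} := isClosed_le (by fun_prop) continuous_const
    have hcl2 : IsClosed {z : ℂ | η / 2 ≤ dist z p} := isClosed_le continuous_const (by fun_prop)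
    have e1 : EqOn g (fun z => G (ρ z)) (U ∩ {z | dist z p ≤ η / 2}) := fun z hz => by
      have : dist z p ≤ η / 2 := hz.2
      simp only [g, this, if_true]
    have e2 : EqOn g (fun z => ψ z - c) (U ∩ {z | η / 2 ≤ dist z p}) := fun z hz => by
      rcases lt_or_eq_of_le (show η / 2 ≤ dist z p from hz.2) with h | h
      · simp only [g, not_le.2 h, if_false]
      · have hzs : z ∈ sphere p (η / 2) := h.symm
        simp only [g, h.symm.le, if_true, hρid z hzs]
        exact hGψ ⟨hz.1, hzs⟩
    have c1 : ContinuousOn g (U ∩ {z | dist z p ≤ η / 2}) :=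
      ((hG.comp hρ hρs).mono inter_subset_left).congr e1
    have c2 : ContinuousOn g (U ∩ {z | η / 2 ≤ dist z p}) :=
      ((hφ.cont_inv.sub continuousOn_const).mono inter_subset_left).congr e2
    refine (c1.union_of_isClosed c2 (hUcl.inter hcl1) (hUcl.inter hcl2)).mono fun z hz => ?_
    rcases le_total (dist z p) (η / 2) with h | h
    · exact Or.inl ⟨hz, h⟩
    · exact Or.inr ⟨hz, h⟩
  have hg0 : ∀ z ∈ U, g z ≠ 0 := by
    intro z hz
    by_cases h : dist z p ≤ η / 2
    · simp only [g, h, if_true]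
      exact hG0 _ (hρs z hz)
    · simp only [g, h, if_false]
      exact hne z hz (not_le.1 h).le
  obtain ⟨L, hL, hL'⟩ := (hφ.hasLog hgc hg0).comp (hφ.cont.mono hsD) fun z hz => hφ.maps (hsD hz)
  refine no_log_on_sphere hr ⟨L, hL, fun z hz => ?_⟩
  have hfar : ¬ dist (φ z) p ≤ η / 2 := by
    intro h
    have h1 : dist (φ z) (φ c) < η := by
      have := dist_triangle (φ z) p (φ c)
      linarith
    exact hball (mem_ball.2 h1) ⟨z, hz, rfl⟩
  have := hL' z hz
  simpa only [g, Function.comp_apply, hfar, if_false, hφ.left z (hsD hz)] using this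

lemma interior_eq (hφ : DiskChart φ ψ U) : interior U = φ '' ball 0 1 := by
  refine Subset.antisymm (fun w hw => ?_) ?_
  · have hwU := interior_subset hw
    have h1 : ‖ψ w‖ ≤ 1 := by simpa using hφ.maps_inv hwU
    refine ⟨ψ w, ?_, hφ.right w hwU⟩
    rw [mem_ball_zero_iff]
    refine lt_of_le_of_ne h1 fun h => hφ.not_mem_interior h ?_
    rwa [hφ.right w hwU]
  · rintro _ ⟨c, hc, rfl⟩
    exact hφ.mem_interior (by simpa using hc)

lemma frontier_eq (hφ : DiskChart φ ψ U) : frontier U = φ '' sphere 0 1 := by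
  rw [hφ.isCompact.isClosed.frontier_eq]
  refine Subset.antisymm ?_ ?_
  · rintro w ⟨hwU, hw⟩
    have h1 : ‖ψ w‖ ≤ 1 := by simpa using hφ.maps_inv hwU
    refine ⟨ψ w, ?_, hφ.right w hwU⟩
    rw [mem_sphere_zero_iff_norm]
    refine le_antisymm h1 (not_lt.1 fun h => hw ?_)
    rw [← hφ.right w hwU]
    exact hφ.mem_interior h
  · rintro _ ⟨s, hs, rfl⟩
    exact ⟨hφ.maps (sphere_subset_closedBall hs), hφ.not_mem_interior (by simpa using hs)⟩

lemma isPreconnected_interior (hφ : DiskChart φ ψ U) : IsPreconnected (interior U) := by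
  rw [hφ.interior_eq]
  exact (convex_ball 0 1).isPreconnected.image _ (hφ.cont.mono ball_subset_closedBall)

lemma subset_closure_interior (hφ : DiskChart φ ψ U) : U ⊆ closure (interior U) := by
  rw [hφ.interior_eq]
  rw [← hφ.image_eq]
  have := ContinuousOn.image_closure (f := φ) (s := ball (0 : ℂ) 1)
    (by rw [closure_ball _ one_ne_zero]; exact hφ.cont)
  rwa [closure_ball _ one_ne_zero] at this

/-- On the frontier, `z - a` and `z - b` differ by an exponential factor when `a` and `b` are
interior points: join them inside the interior. -/
lemma exists_log_move (hφ : DiskChart φ ψ U) {a b : ℂ} (ha : a ∈ interior U)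
    (hb : b ∈ interior U) :
    ∃ L : ℂ → ℂ, ContinuousOn L (frontier U) ∧
      ∀ z ∈ frontier U, z - b = (z - a) * Complex.exp (L z) := by
  have hmemInt := hφ.interior_eq
  rw [hmemInt] at ha hb
  obtain ⟨x, hx, rfl⟩ := ha
  obtain ⟨y, hy, rfl⟩ := hb
  have hmem : ∀ t ∈ Icc (0 : ℝ) 1, (1 - t) • x + t • y ∈ ball (0 : ℂ) 1 := fun t ht =>
    convex_ball _ _ hx hy (by linarith [ht.2]) ht.1 (by ring)
  obtain ⟨L, hL, hL'⟩ := exists_log_of_homotopy (A := frontier U)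
    (H := fun t z => z - φ ((1 - t) • x + t • y))
    (continuousOn_snd.sub (hφ.cont.comp (f := fun p : ℝ × ℂ => (1 - p.1) • x + p.1 • y)
      (by fun_prop) fun p hp => ball_subset_closedBall (hmem _ hp.1)))
    (fun t ht z hz h => hz.2 (by
      rw [sub_eq_zero.1 h, hmemInt]
      exact ⟨_, hmem t ht, rfl⟩))
  exact ⟨L, hL, by simpa using hL'⟩

/-- The frontier of a topological disk winds once around each interior point: `z - w` is not an
`n`-th power of a continuous function on the frontier, for `n ≥ 2`. A root on the frontier
would spread, along the radii of the disk, to a root on `U \ {φ 0}` and hence on a small circle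
about `φ 0`. -/
lemma no_root_on_frontier (hφ : DiskChart φ ψ U) {w : ℂ} (hw : w ∈ interior U) {n : ℕ}
    (hn : 2 ≤ n) {r : ℂ → ℂ} (hr : ContinuousOn r (frontier U))
    (h : ∀ z ∈ frontier U, z - w = r z ^ n) : False := by
  have hnC : (n : ℂ) ≠ 0 := by
    have : n ≠ 0 := by omega
    exact_mod_cast this
  have h0int : φ 0 ∈ interior U := hφ.mem_interior (by simp)
  obtain ⟨M, hM, hM'⟩ := hφ.exists_log_move hw h0int
  have hnorm : ∀ t ∈ Icc (0 : ℝ) 1, ∀ z ∈ closedBall (0 : ℂ) 1 \ {0},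
      ‖((1 - t + t / ‖z‖ : ℝ) : ℂ) * z‖ = (1 - t) * ‖z‖ + t := by
    rintro t ⟨ht0, ht1⟩ z ⟨hz, hz0⟩
    have hz0' : ‖z‖ ≠ 0 := norm_ne_zero_iff.2 hz0
    have : 0 ≤ 1 - t := by linarith
    rw [norm_mul, Complex.norm_real, Real.norm_of_nonneg (by positivity)]
    field_simp
  have hmem : ∀ t ∈ Icc (0 : ℝ) 1, ∀ z ∈ closedBall (0 : ℂ) 1 \ {0},
      ((1 - t + t / ‖z‖ : ℝ) : ℂ) * z ∈ closedBall (0 : ℂ) 1 \ {0} := by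
    intro t ht z hz
    have h1 := hnorm t ht z hz
    have hz1 : ‖z‖ ≤ 1 := by simpa using hz.1
    have hz0 : 0 < ‖z‖ := norm_pos_iff.2 hz.2
    refine ⟨?_, fun h => ?_⟩
    · rw [mem_closedBall_zero_iff, h1]
      nlinarith [ht.1, ht.2]
    · rw [mem_singleton_iff.1 h, norm_zero] at h1
      rcases ht.1.eq_or_lt with h2 | h2
      · rw [← h2] at h1
        linarith
      · nlinarith [ht.2]
  obtain ⟨L, hL, hL'⟩ := exists_log_of_homotopy (A := closedBall (0 : ℂ) 1 \ {0})
    (H := fun t z => φ (((1 - t + t / ‖z‖ : ℝ) : ℂ) * z) - φ 0)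
    ((hφ.cont.comp (f := fun p : ℝ × ℂ => ((1 - p.1 + p.1 / ‖p.2‖ : ℝ) : ℂ) * p.2)
      (by
        refine ContinuousOn.mul (Complex.continuous_ofReal.comp_continuousOn ?_) (by fun_prop)
        refine ContinuousOn.add (by fun_prop) (continuousOn_fst.div (by fun_prop) ?_)
        exact fun p hp => norm_ne_zero_iff.2 hp.2.2)
      fun p hp => (hmem _ hp.1 _ hp.2).1).sub continuousOn_const)
    (fun t ht z hz h0 => (hmem t ht z hz).2
      (hφ.injOn (hmem t ht z hz).1 (by simp) (sub_eq_zero.1 h0)))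
  simp only [sub_self, zero_add, sub_zero, zero_div, add_zero, Complex.ofReal_one,
    one_mul] at hL'
  let σ : ℂ → ℂ := fun z => ((1 / ‖z‖ : ℝ) : ℂ) * z
  have hσ : ContinuousOn σ (closedBall (0 : ℂ) 1 \ {0}) := by
    refine ContinuousOn.mul (Complex.continuous_ofReal.comp_continuousOn ?_) (by fun_prop)
    exact continuousOn_const.div (by fun_prop) fun z hz => norm_ne_zero_iff.2 hz.2
  have hσs : ∀ z ∈ closedBall (0 : ℂ) 1 \ {0}, σ z ∈ sphere (0 : ℂ) 1 := by
    intro z hz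
    have := hnorm 1 (by simp) z hz
    rw [mem_sphere_zero_iff_norm]
    simpa [σ] using this
  have hσf : MapsTo (φ ∘ σ) (closedBall (0 : ℂ) 1 \ {0}) (frontier U) := fun z hz => by
    rw [hφ.frontier_eq]
    exact ⟨_, hσs z hz, rfl⟩
  have hφσ : ContinuousOn (φ ∘ σ) (closedBall (0 : ℂ) 1 \ {0}) :=
    hφ.cont.comp hσ fun z hz => sphere_subset_closedBall (hσs z hz)
  -- an `n`-th root of `φ z - φ 0` on the punctured disk
  let q : ℂ → ℂ := fun z => r (φ (σ z)) * Complex.exp (M (φ (σ z)) / n) * Complex.exp (-(L z) / n)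
  have hqc : ContinuousOn q (closedBall (0 : ℂ) 1 \ {0}) := by
    have h1 := hr.comp hφσ hσf
    have h2 := hM.comp hφσ hσf
    exact (h1.mul (h2.div_const _).cexp).mul (hL.neg.div_const _).cexp
  have hq : ∀ z ∈ closedBall (0 : ℂ) 1 \ {0}, φ z - φ 0 = q z ^ n := by
    intro z hz
    have h1 := hL' z hz
    have h2 := hM' _ (hσf hz)
    have h3 := h _ (hσf hz)
    simp only [Function.comp_apply] at h2 h3
    simp only [q, mul_pow, ← Complex.exp_nat_mul, mul_div_cancel₀ _ hnC]
    rw [← h3, ← h2, h1, mul_assoc, ← Complex.exp_add, add_neg_cancel, Complex.exp_zero, mul_one]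
  obtain ⟨ε, hε, hball⟩ := nhds_basis_closedBall.mem_iff.1 (mem_interior_iff_mem_nhds.1 h0int)
  have hsub : sphere (φ 0) ε ⊆ U := sphere_subset_closedBall.trans hball
  have hψ : MapsTo ψ (sphere (φ 0) ε) (closedBall (0 : ℂ) 1 \ {0}) := fun z hz =>
    ⟨hφ.maps_inv (hsub hz), fun h => by
      have h2 : z = φ 0 := by rw [← hφ.right z (hsub hz), mem_singleton_iff.1 h]
      rw [h2, mem_sphere, dist_self] at hz
      exact hε.ne hz⟩
  refine no_root_on_sphere hε hn (hqc.comp (hφ.cont_inv.mono hsub) hψ) fun z hz => ?_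
  have := hq _ (hψ hz)
  rwa [hφ.right z (hsub hz)] at this

end DiskChart

/-! ### Counting zeros -/

/-- Dividing out finitely many zeros, counted with multiplicity by the multiset `m`. -/
lemma exists_factorization {U : Set ℂ} (S : Finset ℂ) :
    ∀ G : ℂ → ℂ, ContinuousOn G U → DifferentiableOn ℂ G (interior U) →
      (∀ a ∈ S, a ∈ interior U) → (∀ z ∈ U, G z = 0 ↔ z ∈ S) →
      ∃ m : Multiset ℂ, (∀ a ∈ m, a ∈ interior U) ∧ ∃ h : ℂ → ℂ, ContinuousOn h U ∧
        DifferentiableOn ℂ h (interior U) ∧ (∀ z ∈ U, h z ≠ 0) ∧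
        ∀ z ∈ U, G z = (m.map fun a => z - a).prod * h z := by
  classical
  induction S using Finset.induction_on with
  | empty =>
    intro G hG hGd _ h0
    exact ⟨0, by simp, G, hG, hGd, fun z hz => by simpa using (h0 z hz).not, by simp⟩
  | insert a S haS ih =>
    intro G hG hGd hS h0
    have ha : a ∈ interior U := hS a (Finset.mem_insert_self _ _)
    have hUn : interior U ∈ 𝓝 a := isOpen_interior.mem_nhds ha
    have hGa : AnalyticAt ℂ G a := hGd.analyticAt hUn
    have hnz : ¬ ∀ᶠ z in 𝓝 a, G z = 0 := fun hz => by
      have : {z | z ∈ insert a S} ∈ 𝓝 a := by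
        filter_upwards [hz, hUn] with z h1 h2
        exact (h0 z (interior_subset h2)).1 h1
      exact infinite_of_mem_nhds a this (insert a S).finite_toSet
    obtain ⟨n, g, hg, hga, hgG⟩ := hGa.exists_eventuallyEq_pow_smul_nonzero_iff.2 hnz
    let h : ℂ → ℂ := Function.update (fun z => G z / (z - a) ^ n) a (g a)
    have hne : ∀ z, z ≠ a → h z = G z / (z - a) ^ n := fun z hz => by
      simp [h, Function.update_of_ne hz]
    have hhg : h =ᶠ[𝓝 a] g := by
      filter_upwards [hgG] with z hz
      rcases eq_or_ne z a with rfl | hza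
      · simp [h]
      · rw [hne z hza, hz, smul_eq_mul, mul_div_cancel_left₀]
        exact pow_ne_zero _ (sub_ne_zero.2 hza)
    have hha : DifferentiableAt ℂ h a := hg.differentiableAt.congr_of_eventuallyEq hhg
    have hev : ∀ z, z ≠ a → h =ᶠ[𝓝 z] fun z => G z / (z - a) ^ n := fun z hz => by
      filter_upwards [isOpen_ne.mem_nhds hz] with y hy using hne y hy
    have hpow : ∀ z, z ≠ a → (z - a) ^ n ≠ 0 := fun z hz => pow_ne_zero _ (sub_ne_zero.2 hz)
    have hhc : ContinuousOn h U := by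
      intro z hz
      rcases eq_or_ne z a with rfl | hza
      · exact hha.continuousAt.continuousWithinAt
      · exact ((hG z hz).div (by fun_prop) (hpow z hza)).congr_of_eventuallyEq
          ((hev z hza).filter_mono nhdsWithin_le_nhds) (hne z hza)
    have hhd : DifferentiableOn ℂ h (interior U) := by
      intro z hz
      rcases eq_or_ne z a with rfl | hza
      · exact hha.differentiableWithinAt
      · exact ((hGd z hz).fun_div (by fun_prop) (hpow z hza)).congr_of_eventuallyEq
          ((hev z hza).filter_mono nhdsWithin_le_nhds) (hne z hza)
    have hGh : ∀ z ∈ U, G z = (z - a) ^ n * h z := by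
      intro z _
      rcases eq_or_ne z a with rfl | hza
      · have := hgG.self_of_nhds
        simpa [h] using this
      · rw [hne z hza, mul_div_cancel₀ _ (hpow z hza)]
    have hh0 : ∀ z ∈ U, h z = 0 ↔ z ∈ S := by
      intro z hz
      rcases eq_or_ne z a with rfl | hza
      · simp [h, hga, haS]
      · have := h0 z hz
        rw [hGh z hz, mul_eq_zero, or_iff_right (hpow z hza), Finset.mem_insert,
          or_iff_right hza] at this
        exact this
    obtain ⟨m, hm, k, hk, hkd, hk0, hkm⟩ := ih h hhc hhd
      (fun b hb => hS b (Finset.mem_insert_of_mem hb)) hh0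
    refine ⟨Multiset.replicate n a + m, fun b hb => ?_, k, hk, hkd, hk0, fun z hz => ?_⟩
    · rcases Multiset.mem_add.1 hb with hb | hb
      · rwa [Multiset.eq_of_mem_replicate hb]
      · exact hm b hb
    · rw [hGh z hz, hkm z hz]
      simp [mul_assoc]

/-- On the frontier, a product of `n` linear factors with interior zeros is `(z - a) ^ n` up to
an exponential factor. -/
lemma DiskChart.exists_log_prod {φ ψ : ℂ → ℂ} {U : Set ℂ} (hφ : DiskChart φ ψ U) {a : ℂ}
    (ha : a ∈ interior U) (m : Multiset ℂ) (hm : ∀ b ∈ m, b ∈ interior U) :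
    ∃ L : ℂ → ℂ, ContinuousOn L (frontier U) ∧ ∀ z ∈ frontier U,
      (m.map fun b => z - b).prod = (z - a) ^ (Multiset.card m) * Complex.exp (L z) := by
  induction m using Multiset.induction_on with
  | empty => exact ⟨0, continuousOn_const, by simp⟩
  | cons b m ih =>
    obtain ⟨L, hL, hL'⟩ := ih fun c hc => hm c (Multiset.mem_cons_of_mem hc)
    obtain ⟨M, hM, hM'⟩ := hφ.exists_log_move ha (hm b (Multiset.mem_cons_self b m))
    refine ⟨fun z => M z + L z, hM.add hL, fun z hz => ?_⟩
    rw [Multiset.map_cons, Multiset.prod_cons, hL' z hz, hM' z hz, Multiset.card_cons,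
      Complex.exp_add]
    ring

/-- A value `w` in the interior of `V` that `f` attains is attained at exactly one point, with
multiplicity one: if `f - w` had `n ≥ 2`
zeros, it would be an `n`-th power on the frontier, and so would `z - w` on the frontier
of `V`. -/
lemma exists_simple_factor {φU ψU φV ψV : ℂ → ℂ} {U V : Set ℂ} (hU : DiskChart φU ψU U)
    (hV : DiskChart φV ψV V) {f k : ℂ → ℂ} (hfc : ContinuousOn f U)
    (hfa : DifferentiableOn ℂ f (interior U)) (hff : MapsTo f (frontier U) (frontier V))
    (hk : ContinuousOn k (frontier V)) (hkm : MapsTo k (frontier V) (frontier U))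
    (hfk : ∀ w ∈ frontier V, f (k w) = w) (hconst : ¬ ∃ w, ∀ z ∈ interior U, f z = w)
    {w : ℂ} (hw : w ∈ interior V) (hex : ∃ z ∈ interior U, f z = w) :
    ∃ a ∈ interior U, ∃ h : ℂ → ℂ, DifferentiableOn ℂ h (interior U) ∧ (∀ z ∈ U, h z ≠ 0) ∧
      ∀ z ∈ U, f z - w = (z - a) * h z := by
  have hUcl := hU.isCompact.isClosed
  have hfrU : frontier U ⊆ U := hUcl.frontier_subset
  let Z : Set ℂ := {z ∈ U | f z = w}
  have hZint : Z ⊆ interior U := by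
    rintro z ⟨hz, hzw⟩
    by_contra hzi
    have hzf : z ∈ frontier U := by
      rw [hUcl.frontier_eq]
      exact ⟨hz, hzi⟩
    have := hff hzf
    rw [hzw] at this
    exact this.2 hw
  have hGd : DifferentiableOn ℂ (fun z => f z - w) (interior U) := hfa.sub_const w
  have hZfin : Z.Finite := by
    have hZc : IsCompact Z := hU.isCompact.of_isClosed_subset
      (hfc.preimage_isClosed_of_isClosed hUcl (isClosed_singleton (x := w))) (sep_subset _ _)
    rcases (hGd.analyticOnNhd isOpen_interior).eqOn_zero_or_eventually_ne_zero_of_preconnected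
      hU.isPreconnected_interior with h | h
    · exact absurd ⟨w, fun z hz => sub_eq_zero.1 (h hz)⟩ hconst
    · refine (hZc.finite_sdiff_of_mem_codiscreteWithin
        (codiscreteWithin_mono hZint h)).subset fun z hz => ⟨hz, ?_⟩
      simpa using sub_eq_zero.2 hz.2
  obtain ⟨m, hm, h, hhc, hhd, hh0, hfac⟩ := exists_factorization hZfin.toFinset
    (fun z => f z - w) (hfc.sub continuousOn_const) hGd
    (fun a ha => hZint (hZfin.mem_toFinset.1 ha))
    (fun z hz => by simp [Z, hz, sub_eq_zero])
  obtain ⟨z₀, hz₀, hz₀w⟩ := hex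
  have hcard : Multiset.card m = 1 := by
    have h0 : Multiset.card m ≠ 0 := fun h0 => by
      have := hfac z₀ (interior_subset hz₀)
      rw [Multiset.card_eq_zero.1 h0, hz₀w] at this
      simp only [sub_self, Multiset.map_zero, Multiset.prod_zero, one_mul] at this
      exact hh0 z₀ (interior_subset hz₀) this.symm
    by_contra h1
    have h2 : 2 ≤ Multiset.card m := by omega
    have hnC : (Multiset.card m : ℂ) ≠ 0 := by exact_mod_cast h0
    obtain ⟨L, hL, hL'⟩ := hU.exists_log_prod hz₀ m hm
    obtain ⟨M, hM, hM'⟩ := hU.hasLog hhc hh0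
    let r : ℂ → ℂ := fun z => (z - z₀) * Complex.exp ((L z + M z) / Multiset.card m)
    have hr : ContinuousOn r (frontier U) :=
      (by fun_prop : ContinuousOn (fun z : ℂ => z - z₀) (frontier U)).mul
        ((hL.add (hM.mono hfrU)).div_const _).cexp
    refine hV.no_root_on_frontier hw h2 (hr.comp hk hkm) fun ζ hζ => ?_
    have hz := hkm hζ
    have := hfac _ (hfrU hz)
    simp only [hfk ζ hζ] at this
    rw [this, hL' _ hz, hM' _ (hfrU hz)]
    simp only [r, Function.comp_apply, mul_pow, ← Complex.exp_nat_mul, mul_div_cancel₀ _ hnC,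
      Complex.exp_add]
    ring
  obtain ⟨a, rfl⟩ := Multiset.card_eq_one.1 hcard
  exact ⟨a, hm a (by simp), h, hhd, hh0, fun z hz => by simpa using hfac z hz⟩

end JordanRegion

/-! ### The mapping theorem -/

open JordanRegion in
/-- Argument-principle mapping theorem for Jordan regions (bounded case). -/
theorem jordan_region_mapping (U V : Set ℂ) (hUc : IsCompact U) (hVc : IsCompact V)
    (hU : Nonempty (Metric.closedBall (0 : ℂ) 1 ≃ₜ U))
    (hV : Nonempty (Metric.closedBall (0 : ℂ) 1 ≃ₜ V))
    (f : ℂ → ℂ) (hfc : ContinuousOn f U) (hfa : DifferentiableOn ℂ f (interior U))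
    (hbd : ∃ h : frontier U ≃ₜ frontier V, ∀ z : frontier U, (h z : ℂ) = f z) :
    Set.BijOn f U V ∧
    Set.BijOn f (interior U) (interior V) ∧
    ∃ g : ℂ → ℂ, ContinuousOn g V ∧ DifferentiableOn ℂ g (interior V) ∧
      (∀ z ∈ U, g (f z) = z) ∧ (∀ w ∈ V, f (g w) = w) := by
  classical
  obtain ⟨φU, ψU, cU⟩ := exists_diskChart hU
  obtain ⟨φV, ψV, cV⟩ := exists_diskChart hV
  obtain ⟨e, he⟩ := hbd
  have hfrU : frontier U ⊆ U := hUc.isClosed.frontier_subset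
  have hfrV : frontier V ⊆ V := hVc.isClosed.frontier_subset
  have hsplitU : ∀ z ∈ U, z ∈ interior U ∨ z ∈ frontier U := fun z hz => by
    rw [hUc.isClosed.frontier_eq]
    by_cases h : z ∈ interior U
    · exact Or.inl h
    · exact Or.inr ⟨hz, h⟩
  have hff : MapsTo f (frontier U) (frontier V) := fun z hz => by
    rw [← he ⟨z, hz⟩]
    exact (e ⟨z, hz⟩).2
  have hfinj : InjOn f (frontier U) := fun x hx y hy h => by
    have : e ⟨x, hx⟩ = e ⟨y, hy⟩ := Subtype.ext (by rw [he, he]; exact h)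
    simpa using e.injective this
  -- the inverse of `f` on the frontier, as a function on `ℂ`
  let k : ℂ → ℂ := fun w => if hw : w ∈ frontier V then e.symm ⟨w, hw⟩ else 0
  have hk : ContinuousOn k (frontier V) := by
    rw [continuousOn_iff_continuous_domRestrict]
    have : Continuous fun w => (e.symm w : ℂ) := by fun_prop
    convert this using 1
    ext w
    simp only [k, domRestrict_apply, w.2, dite_true]
  have hkm : MapsTo k (frontier V) (frontier U) := fun w hw => by
    simp only [k, hw, dite_true]
    exact (e.symm ⟨w, hw⟩).2
  have hfk : ∀ w ∈ frontier V, f (k w) = w := fun w hw => by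
    simp only [k, hw, dite_true]
    rw [← he, e.apply_symm_apply]
  have hconst : ¬ ∃ w, ∀ z ∈ interior U, f z = w := by
    rintro ⟨w, hw⟩
    have hall : ∀ z ∈ U, f z = w := by
      intro z hz
      have hcl : IsClosed (U ∩ f ⁻¹' {w}) :=
        hfc.preimage_isClosed_of_isClosed hUc.isClosed isClosed_singleton
      have hsub : interior U ⊆ U ∩ f ⁻¹' {w} := fun y hy => ⟨interior_subset hy, hw y hy⟩
      exact (closure_minimal hsub hcl (cU.subset_closure_interior hz)).2
    have h1 : φU 1 ∈ frontier U := by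
      rw [cU.frontier_eq]
      exact ⟨1, by simp, rfl⟩
    have h2 : φU (-1) ∈ frontier U := by
      rw [cU.frontier_eq]
      exact ⟨-1, by simp, rfl⟩
    have h3 := hfinj h1 h2 ((hall _ (hfrU h1)).trans (hall _ (hfrU h2)).symm)
    have h4 := cU.injOn (by simp) (by simp) h3
    norm_num at h4
  have hopen : ∀ s ⊆ interior U, IsOpen s → IsOpen (f '' s) :=
    ((hfa.analyticOnNhd isOpen_interior).is_constant_or_isOpen
      cU.isPreconnected_interior).resolve_left hconst
  have hfO : IsOpen (f '' interior U) := hopen _ subset_rfl isOpen_interior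
  have hfUc : IsCompact (f '' U) := hUc.image_of_continuousOn hfc
  -- the part of the image outside `V` is a bounded open set with frontier in `V`, hence empty
  have hfUV : MapsTo f U V := by
    intro z hz
    by_contra hzV
    have hOeq : f '' U \ V = f '' interior U \ V := by
      refine Subset.antisymm ?_ (sdiff_subset_sdiff_left (image_mono interior_subset))
      rintro _ ⟨⟨y, hy, rfl⟩, hyV⟩
      rcases hsplitU y hy with h | h
      · exact ⟨⟨y, h, rfl⟩, hyV⟩
      · exact absurd (hfrV (hff h)) hyV
    have hO : IsOpen (f '' U \ V) := by
      rw [hOeq]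
      exact hfO.sdiff hVc.isClosed
    refine not_mem_of_frontier_subset (K := V) (O := f '' U \ V) hVc.isClosed
      (hfUc.isBounded.subset sdiff_subset) ?_ ⟨⟨z, hz, rfl⟩, hzV⟩
      (cV.hasLog (by fun_prop) fun y hy h => hzV (sub_eq_zero.1 h ▸ hy))
    intro y hy
    rw [hO.frontier_eq] at hy
    by_contra hyV
    exact hy.2 ⟨closure_minimal sdiff_subset hfUc.isClosed hy.1, hyV⟩
  have hfint : MapsTo f (interior U) (interior V) := fun z hz =>
    interior_maximal (image_subset_iff.2 fun y hy => hfUV (interior_subset hy)) hfO ⟨z, hz, rfl⟩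
  have hsurj : SurjOn f (interior U) (interior V) := by
    have hcl : IsOpen (interior V \ f '' U) := isOpen_interior.sdiff hfUc.isClosed
    intro w hw
    by_contra hwn
    have hcover : interior V ⊆ f '' interior U ∪ (interior V \ f '' U) := by
      intro y hy
      by_cases hyU : y ∈ f '' U
      · obtain ⟨x, hx, rfl⟩ := hyU
        rcases hsplitU x hx with h | h
        · exact Or.inl ⟨x, h, rfl⟩
        · exact absurd hy (hff h).2
      · exact Or.inr ⟨hy, hyU⟩
    have h0 : φU 0 ∈ interior U := cU.mem_interior (by simp)
    obtain ⟨y, -, hy1, hy2⟩ := cV.isPreconnected_interior _ _ hfO hcl hcover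
      ⟨f (φU 0), hfint h0, ⟨_, h0, rfl⟩⟩
      ⟨w, hw, (hcover hw).resolve_left hwn⟩
    exact hy2.2 (image_mono interior_subset hy1)
  have hfactor := fun w (hw : w ∈ interior V) =>
    exists_simple_factor cU cV hfc hfa hff hk hkm hfk hconst hw (hsurj hw)
  have hinj : InjOn f U := by
    have hmemInt : ∀ x ∈ interior U, ∀ y ∈ U, f x = f y → x = y := by
      intro x hx y hy hxy
      obtain ⟨a, -, h, -, hh0, hfac⟩ := hfactor _ (hfint hx)
      have hroot : ∀ z ∈ U, f z = f x → z = a := fun z hz hzx => by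
        have := hfac z hz
        rw [hzx, sub_self, zero_eq_mul, or_iff_left (hh0 z hz)] at this
        exact sub_eq_zero.1 this
      rw [hroot x (interior_subset hx) rfl, hroot y hy hxy.symm]
    intro x hx y hy hxy
    rcases hsplitU x hx with h | h
    · exact hmemInt x h y hy hxy
    · rcases hsplitU y hy with h' | h'
      · exact (hmemInt y h' x hx hxy.symm).symm
      · exact hfinj h h' hxy
  have hsurjV : SurjOn f U V := by
    intro w hw
    by_cases h : w ∈ interior V
    · exact image_mono interior_subset (hsurj h)
    · have hwf : w ∈ frontier V := by
        rw [hVc.isClosed.frontier_eq]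
        exact ⟨hw, h⟩
      exact ⟨k w, hfrU (hkm hwf), hfk w hwf⟩
  have hbij : BijOn f U V := ⟨hfUV, hinj, hsurjV⟩
  let g : ℂ → ℂ := Function.invFunOn f U
  have hgf : ∀ z ∈ U, g (f z) = z := fun z hz => hinj.leftInvOn_invFunOn hz
  have hfg : ∀ w ∈ V, f (g w) = w := fun w hw => Function.invFunOn_eq (hsurjV hw)
  have hgm : MapsTo g V U := fun w hw => Function.invFunOn_mem (hsurjV hw)
  have hgc : ContinuousOn g V := by
    rw [continuousOn_iff_isClosed]
    intro t ht
    refine ⟨f '' (U ∩ t), ((hUc.inter_right ht).image_of_continuousOn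
      (hfc.mono inter_subset_left)).isClosed, ?_⟩
    ext w
    constructor
    · rintro ⟨hwt, hwV⟩
      exact ⟨⟨g w, ⟨hgm hwV, hwt⟩, hfg w hwV⟩, hwV⟩
    · rintro ⟨⟨z, ⟨hz, hzt⟩, rfl⟩, hwV⟩
      refine ⟨?_, hwV⟩
      rw [mem_preimage, hgf z hz]
      exact hzt
  refine ⟨hbij, ⟨hfint, hinj.mono interior_subset, hsurj⟩, g, hgc, ?_, hgf, hfg⟩
  intro w hw
  have hVn : interior V ∈ 𝓝 w := isOpen_interior.mem_nhds hw
  obtain ⟨a, ha, h, hhd, hh0, hfac⟩ := hfactor w hw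
  have haU := interior_subset ha
  have hUn : interior U ∈ 𝓝 a := isOpen_interior.mem_nhds ha
  have hfaw : f a = w := by
    have := hfac a haU
    rw [sub_self, zero_mul] at this
    exact sub_eq_zero.1 this
  have hga : g w = a := by rw [← hfaw, hgf a haU]
  have hder : HasDerivAt f (h a) a := by
    have h1 : HasDerivAt (fun z => (z - a) * h z + w) (1 * h a + (a - a) * deriv h a) a :=
      (((hasDerivAt_id a).sub_const a).mul (hhd.differentiableAt hUn).hasDerivAt).add_const w
    rw [sub_self, zero_mul, add_zero, one_mul] at h1
    refine h1.congr_of_eventuallyEq ?_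
    filter_upwards [hUn] with z hz
    rw [← hfac z (interior_subset hz), sub_add_cancel]
  refine (HasDerivAt.of_local_left_inverse (f := f) (f' := h a)
    (hgc.continuousAt (mem_of_superset hVn interior_subset)) (by rwa [hga]) (hh0 a haU)
    ?_).differentiableAt.differentiableWithinAt
  filter_upwards [hVn] with y hy using hfg y (interior_subset hy)
end

section
/- Schwarzian derivative of p: for every τ ∈ ℍ with E2(τ) ≠ 0 and E4(τ) ≠ 0, one has (2·p'(τ)·p'''(τ) − 3·p''(τ)²)/(2·p'(τ)²) = −1152·π²·Δ(τ)/E4(τ)², where p', p'', p''' denote the first, second, and third complex derivatives of p. -/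
/-!
With `D = (2πi)⁻¹ d/dτ`, Ramanujan's identities
`D E₂ = (E₂² - E₄) / 12`, `D E₄ = (E₂ E₄ - E₆) / 3`, `D E₆ = (E₂ E₆ - E₄²) / 2`
express every derivative of `p` as a rational function of `E₂`, `E₄`, `E₆`. The first one gives
`p' = E₄ / E₂²`, the next ones give `p'' = (πi/3) (E₂² E₄ - 2 E₂ E₆ + E₄²) / E₂³` and `p'''`, and
the Schwarzian formula becomes an identity of rational functions.

Each Ramanujan identity (`D_E2`, `D_E4`, `D_E6`) says that a certain holomorphic function of
weight `4`, `6` or `8` for `SL(2, ℤ)` is zero. Invariance follows from the modularity of Serre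
derivatives, and for `E₂` from its quasi-modular transformation law (`E2_serre_slash`). The
`q`-expansions show that the function vanishes at the cusp, so it is a cusp form of weight less
than `12`, and there are no nonzero ones (`eq_zero_of_slash_invariant`).
-/

/-- `q = exp(2πiτ)`. -/
noncomputable def qexp (τ : ℂ) : ℂ := Complex.exp (2 * Real.pi * Complex.I * τ)

/-- Divisor power sum `σ_k(n) = ∑_{d | n} d^k`, as a complex number. -/
noncomputable def sigmaC (k n : ℕ) : ℂ := ∑ d ∈ Nat.divisors n, (d : ℂ) ^ k

/-- Eisenstein series `E₂`. -/
noncomputable def E2 (τ : ℂ) : ℂ := 1 - 24 * ∑' n : ℕ, sigmaC 1 (n + 1) * qexp τ ^ (n + 1)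

/-- Eisenstein series `E₄`. -/
noncomputable def E4 (τ : ℂ) : ℂ := 1 + 240 * ∑' n : ℕ, sigmaC 3 (n + 1) * qexp τ ^ (n + 1)

/-- Eisenstein series `E₆`. -/
noncomputable def E6 (τ : ℂ) : ℂ := 1 - 504 * ∑' n : ℕ, sigmaC 5 (n + 1) * qexp τ ^ (n + 1)

/-- The discriminant form `Δ = (E₄³ - E₆²)/1728`. -/
noncomputable def Δfun (τ : ℂ) : ℂ := (E4 τ ^ 3 - E6 τ ^ 2) / 1728

/-- The ratio of quasi-periods `p(τ) = τ - 6i/(π E₂(τ))`. -/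
noncomputable def pfun (τ : ℂ) : ℂ := τ - 6 * Complex.I / (Real.pi * E2 τ)

open UpperHalfPlane hiding I
open Real Complex Filter ModularForm
open scoped Manifold MatrixGroups ModularForm Topology Derivative

/-! ### Vanishing of low-weight forms and invariance of `D E₂ - E₂² / 12` -/

/-- The vanishing principle behind Ramanujan's identities: a holomorphic function on `ℍ` that
transforms like a level one form of weight `k < 12` and tends to `0` at `i∞` is a cusp form of
weight less than `12`, hence zero. -/
theorem eq_zero_of_slash_invariant {k : ℤ} (hk : k < 12) {f : ℍ → ℂ} (hf : MDiff f)
    (hslash : ∀ γ : SL(2, ℤ), f ∣[k] γ = f) (h0 : Tendsto f atImInfty (𝓝 0)) : f = 0 := by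
  let g : CuspForm 𝒮ℒ k :=
    { toFun := f
      slash_action_eq' := fun _ ⟨γ, hγ⟩ ↦ hγ ▸ hslash γ
      holo' := hf
      zero_at_cusps' := fun {c} hc ↦ by
        rw [Subgroup.IsArithmetic.isCusp_iff_isCusp_SL2Z] at hc
        rw [OnePoint.isZeroAt_iff_forall_SL2Z hc]
        intro γ _
        rw [hslash γ]
        exact h0 }
  have hg : g = 0 :=
    rank_zero_iff_forall_zero.mp (CuspForm.rank_eq_zero_of_weight_lt_twelve hk) g
  exact congrArg DFunLike.coe hg

/-- `D E₂ - E₂² / 12` is invariant in weight `4`, although `E₂` itself is not modular: the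
anomaly in the transformation law of `E₂` contributes the same terms to `D E₂` and to
`E₂² / 12`. -/
theorem E2_serre_slash (γ : SL(2, ℤ)) :
    (D EisensteinSeries.E2 - (12⁻¹ : ℂ) • EisensteinSeries.E2 ^ 2) ∣[(4 : ℤ)] γ =
      D EisensteinSeries.E2 - (12⁻¹ : ℂ) • EisensteinSeries.E2 ^ 2 := by
  ext z
  have hE : EisensteinSeries.E2 ∣[(2 : ℤ)] γ =
      EisensteinSeries.E2 - (1 / (2 * riemannZeta 2)) • EisensteinSeries.D2 γ :=
    EisensteinSeries.E2_slash_action γ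
  have hd : denom γ z ≠ 0 := denom_ne_zero γ z
  have hD2 : HasDerivAt (EisensteinSeries.D2 γ ∘ ofComplex)
      (2 * π * I * γ 1 0 * (-(γ 1 0) * denom γ z ^ (-2 : ℤ))) z := by
    have h := (hasDerivAt_denom_zpow (γ : GL (Fin 2) ℝ) (-1) z).const_mul
      (2 * π * I * (γ 1 0 : ℂ))
    convert! h.congr_of_eventuallyEq ?_ using 1
    · simp
    · filter_upwards [isOpen_upperHalfPlaneSet.mem_nhds z.im_pos] with w hw
      simp [EisensteinSeries.D2, ofComplex_apply_of_im_pos hw, div_eq_mul_inv]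
  have hE2 := (UpperHalfPlane.mdifferentiableAt_iff.mp (E2_mdifferentiable z)).hasDerivAt
  have hDz := congrFun (Derivative.normalizedDerivOfComplex_SL_slash (k := 2)
    E2_mdifferentiable (γ := γ)) z
  have hD : D (EisensteinSeries.E2 ∣[(2 : ℤ)] γ) z = D EisensteinSeries.E2 z -
      (1 / (2 * riemannZeta 2)) * (-(γ 1 0) ^ 2 * denom γ z ^ (-2 : ℤ)) := by
    rw [hE]
    have h := hE2.sub (hD2.const_mul (1 / (2 * riemannZeta 2)))
    have h2 : deriv ((EisensteinSeries.E2 - (1 / (2 * riemannZeta 2)) • EisensteinSeries.D2 γ) ∘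
      ofComplex) z = _ := h.deriv
    simp only [Derivative.normalizedDerivOfComplex, h2]
    field_simp
  have hsq := congrFun (ModularForm.mul_slash_SL2 2 2 γ EisensteinSeries.E2 EisensteinSeries.E2) z
  rw [hD] at hDz
  rw [hE] at hDz hsq
  simp only [Pi.sub_apply, Pi.mul_apply, Pi.smul_apply, smul_eq_mul, EisensteinSeries.D2,
    riemannZeta_two, Int.reduceAdd] at hDz hsq
  rw [sub_eq_add_neg, SlashAction.add_slash, SlashAction.neg_slash, ModularForm.SL_smul_slash, sq]
  simp only [Pi.add_apply, Pi.neg_apply, Pi.smul_apply, smul_eq_mul, hsq, Pi.mul_apply]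
  rw [eq_sub_iff_add_eq] at hDz
  rw [← hDz]
  push_cast
  have hpi : (π : ℂ) ≠ 0 := by exact_mod_cast Real.pi_ne_zero
  rw [zpow_neg, zpow_ofNat]
  field_simp
  ring_nf
  simp only [I_sq, show I ^ 3 = -I by rw [pow_succ, I_sq]; ring]
  ring

/-! ### Functions of `q` and their behaviour at the cusp -/

/-- The divisor series `∑_{n ≥ 1} σ_k(n) qⁿ` as a function of `q`, so that `E₂`, `E₄`, `E₆` are
affine functions of `sigmaSeries k (qexp τ)`. -/
noncomputable def sigmaSeries (k : ℕ) (q : ℂ) : ℂ := ∑' n : ℕ, sigmaC k (n + 1) * q ^ (n + 1)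

theorem sigmaC_eq (k n : ℕ) : sigmaC k n = (ArithmeticFunction.sigma k n : ℂ) := by
  simp [sigmaC, ArithmeticFunction.sigma_apply]

theorem differentiableOn_sigmaSeries (k : ℕ) :
    DifferentiableOn ℂ (sigmaSeries k) (Metric.ball 0 1) := by
  intro q hq
  obtain ⟨r, hqr, hr⟩ := exists_between (mem_ball_zero_iff.mp hq)
  have hr0 : 0 ≤ r := (norm_nonneg q).trans hqr.le
  have hs : Summable fun n : ℕ ↦ (n : ℝ) ^ (k + 1) * r ^ n :=
    summable_pow_mul_geometric_of_norm_lt_one (k + 1) (by rwa [Real.norm_of_nonneg hr0])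
  have hu : Summable fun n : ℕ ↦ ((n + 1 : ℕ) : ℝ) ^ (k + 1) * r ^ (n + 1) :=
    (summable_nat_add_iff (f := fun n : ℕ ↦ (n : ℝ) ^ (k + 1) * r ^ n) 1).mpr hs
  have hb : ∀ (n : ℕ) (w : ℂ), w ∈ Metric.ball (0 : ℂ) r →
      ‖sigmaC k (n + 1) * w ^ (n + 1)‖ ≤ ((n + 1 : ℕ) : ℝ) ^ (k + 1) * r ^ (n + 1) := by
    intro n w hw
    have hw1 : ‖w‖ ≤ r := (mem_ball_zero_iff.mp hw).le
    have hσ : (ArithmeticFunction.sigma k (n + 1) : ℝ) ≤ ((n + 1 : ℕ) : ℝ) ^ (k + 1) := by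
      rw [← Nat.cast_pow]
      exact Nat.cast_le.mpr (ArithmeticFunction.sigma_le_pow_succ k (n + 1))
    rw [sigmaC_eq, norm_mul, norm_pow, Complex.norm_natCast]
    exact mul_le_mul hσ (pow_le_pow_left₀ (norm_nonneg w) hw1 _) (by positivity) (by positivity)
  have hd : ∀ n : ℕ, DifferentiableOn ℂ (fun w : ℂ ↦ sigmaC k (n + 1) * w ^ (n + 1))
      (Metric.ball 0 r) := fun n ↦
    ((differentiable_id.pow (n + 1)).const_mul (sigmaC k (n + 1))).differentiableOn
  have h : DifferentiableOn ℂ (sigmaSeries k) (Metric.ball 0 r) :=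
    differentiableOn_tsum_of_summable_norm hu hd Metric.isOpen_ball hb
  exact (h.differentiableAt
    (Metric.isOpen_ball.mem_nhds (mem_ball_zero_iff.mpr hqr))).differentiableWithinAt

theorem qexp_mem_ball {τ : ℂ} (hτ : 0 < τ.im) : qexp τ ∈ Metric.ball (0 : ℂ) 1 := by
  rw [mem_ball_zero_iff]
  exact norm_exp_two_pi_I_lt_one ⟨τ, hτ⟩

theorem tendsto_qexp : Tendsto (fun z : ℍ ↦ qexp z) atImInfty (𝓝 0) := by
  refine (qParam_tendsto_atImInfty one_pos).congr fun z ↦ ?_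
  simp [qexp, Function.Periodic.qParam]

theorem hasDerivAt_comp_qexp {G : ℂ → ℂ} (hG : DifferentiableOn ℂ G (Metric.ball 0 1))
    {τ : ℂ} (hτ : 0 < τ.im) :
    HasDerivAt (fun w ↦ G (qexp w)) (2 * π * I * (qexp τ * deriv G (qexp τ))) τ := by
  have h1 := (hG.differentiableAt (Metric.isOpen_ball.mem_nhds (qexp_mem_ball hτ))).hasDerivAt
  have h2 : HasDerivAt qexp (qexp τ * (2 * π * I)) τ := by
    have h : HasDerivAt (fun x ↦ cexp (2 * π * I * x)) (cexp (2 * π * I * τ) * (2 * π * I)) τ := by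
      simpa using ((hasDerivAt_id τ).const_mul (2 * π * I)).cexp
    exact h
  convert! h1.comp τ h2 using 1
  ring

theorem tendsto_comp_qexp {G : ℂ → ℂ} (hG : DifferentiableOn ℂ G (Metric.ball 0 1)) :
    Tendsto (fun z : ℍ ↦ G (qexp z)) atImInfty (𝓝 (G 0)) :=
  (hG.differentiableAt
    (Metric.ball_mem_nhds 0 one_pos)).continuousAt.tendsto.comp tendsto_qexp

/-- If `F` is a holomorphic function `G` of `q`, then `D F = q G'(q)`, which vanishes at the cusp. -/
theorem tendsto_D_comp_qexp {G : ℂ → ℂ} (hG : DifferentiableOn ℂ G (Metric.ball 0 1))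
    {F : ℍ → ℂ} (hF : ∀ z : ℍ, F z = G (qexp z)) : Tendsto (D F) atImInfty (𝓝 0) := by
  have h := tendsto_qexp.mul (tendsto_comp_qexp (hG.deriv Metric.isOpen_ball))
  rw [zero_mul] at h
  refine h.congr fun z ↦ ?_
  have hev : F ∘ ofComplex =ᶠ[𝓝 (z : ℂ)] fun w ↦ G (qexp w) := by
    filter_upwards [isOpen_upperHalfPlaneSet.mem_nhds z.im_pos] with w hw
    simp [hF, ofComplex_apply_of_im_pos hw]
  have hpi : (π : ℂ) ≠ 0 := by exact_mod_cast Real.pi_ne_zero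
  rw [Derivative.normalizedDerivOfComplex, hev.deriv_eq,
    (hasDerivAt_comp_qexp hG z.im_pos).deriv]
  field_simp

/-- The modular Eisenstein series of weight `2`, defined in Mathlib as a lattice sum, has the
`q`-expansion that defines `E2`. -/
theorem eisE2_eq (z : ℍ) : EisensteinSeries.E2 z = 1 - 24 * sigmaSeries 1 (qexp z) := by
  rw [EisensteinSeries.E2_eq_tsum_cexp, tsum_pnat_eq_tsum_succ
    (f := fun n ↦ (ArithmeticFunction.sigma 1 n : ℂ) * cexp (2 * π * I * z) ^ n)]
  simp [sigmaSeries, sigmaC_eq, qexp]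

theorem eisE4_eq (z : ℍ) : E₄ z = 1 + 240 * sigmaSeries 3 (qexp z) := by
  have h := EisensteinSeries.q_expansion_bernoulli (k := 4) (by norm_num) ⟨2, rfl⟩ z
  simp_rw [zpow_natCast] at h
  rw [h, tsum_pnat_eq_tsum_succ
    (f := fun n ↦ (ArithmeticFunction.sigma (4 - 1) n : ℂ) * cexp (2 * π * I * z) ^ n)]
  norm_num [sigmaSeries, sigmaC_eq, qexp, show bernoulli 4 = -1 / 30 by decide +kernel]

theorem eisE6_eq (z : ℍ) : E₆ z = 1 - 504 * sigmaSeries 5 (qexp z) := by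
  have h := EisensteinSeries.q_expansion_bernoulli (k := 6) (by norm_num) ⟨3, rfl⟩ z
  simp_rw [zpow_natCast] at h
  rw [h, tsum_pnat_eq_tsum_succ
    (f := fun n ↦ (ArithmeticFunction.sigma (6 - 1) n : ℂ) * cexp (2 * π * I * z) ^ n)]
  norm_num [sigmaSeries, sigmaC_eq, qexp, show bernoulli 6 = 1 / 42 by decide +kernel]

theorem sigmaSeries_zero (k : ℕ) : sigmaSeries k 0 = 0 := by simp [sigmaSeries]

theorem tendsto_const_add_sigmaSeries {F : ℍ → ℂ} {c : ℂ} {k : ℕ}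
    (hF : ∀ z : ℍ, F z = 1 + c * sigmaSeries k (qexp z)) :
    Tendsto F atImInfty (𝓝 1) ∧ Tendsto (D F) atImInfty (𝓝 0) := by
  have hG : DifferentiableOn ℂ (fun q ↦ 1 + c * sigmaSeries k q) (Metric.ball 0 1) :=
    ((differentiableOn_sigmaSeries k).const_mul c).const_add 1
  refine ⟨?_, tendsto_D_comp_qexp hG hF⟩
  have h := tendsto_comp_qexp hG
  simp only [sigmaSeries_zero, mul_zero, add_zero] at h
  exact h.congr fun z ↦ (hF z).symm

theorem tendsto_E2 : Tendsto EisensteinSeries.E2 atImInfty (𝓝 1) ∧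
    Tendsto (D EisensteinSeries.E2) atImInfty (𝓝 0) :=
  tendsto_const_add_sigmaSeries (c := -24) (k := 1) fun z ↦ by rw [eisE2_eq]; ring

theorem tendsto_E4 : Tendsto E₄ atImInfty (𝓝 1) ∧
    Tendsto (D E₄) atImInfty (𝓝 0) :=
  tendsto_const_add_sigmaSeries eisE4_eq

theorem tendsto_E6 : Tendsto E₆ atImInfty (𝓝 1) ∧
    Tendsto (D E₆) atImInfty (𝓝 0) :=
  tendsto_const_add_sigmaSeries (c := -504) (k := 5) fun z ↦ by rw [eisE6_eq]; ring

/-! ### Ramanujan's identities -/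

theorem E4_slash (γ : SL(2, ℤ)) : ⇑E₄ ∣[(4 : ℤ)] γ = E₄ :=
  SlashInvariantForm.slash_action_eqn E₄ _ ⟨γ, rfl⟩

theorem E6_slash (γ : SL(2, ℤ)) : ⇑E₆ ∣[(6 : ℤ)] γ = E₆ :=
  SlashInvariantForm.slash_action_eqn E₆ _ ⟨γ, rfl⟩

/-- Ramanujan's identity for `D E₂`, where `D = (2πi)⁻¹ d/dτ`. -/
theorem D_E2 (z : ℍ) : D EisensteinSeries.E2 z =
    (EisensteinSeries.E2 z ^ 2 - E₄ z) / 12 := by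
  have h := eq_zero_of_slash_invariant (k := 4) (by norm_num)
    (f := (D EisensteinSeries.E2 - (12⁻¹ : ℂ) • EisensteinSeries.E2 ^ 2) +
      (12⁻¹ : ℂ) • ⇑E₄)
    (((Derivative.normalizedDerivOfComplex_mdifferentiable E2_mdifferentiable).sub
      ((E2_mdifferentiable.pow 2).const_smul _)).add (E₄.holo'.const_smul _))
    (fun γ ↦ by rw [SlashAction.add_slash, E2_serre_slash, ModularForm.SL_smul_slash, E4_slash])
    (by
      convert! (tendsto_E2.2.sub ((tendsto_E2.1.pow 2).const_mul 12⁻¹)).add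
        (tendsto_E4.1.const_mul 12⁻¹) using 2
      norm_num)
  have hz := congrFun h z
  simp only [Pi.add_apply, Pi.sub_apply, Pi.smul_apply, Pi.pow_apply, smul_eq_mul,
    Pi.zero_apply] at hz
  linear_combination hz

/-- Ramanujan's identity for `D E₄`, from the Serre derivative of `E₄`. -/
theorem D_E4 (z : ℍ) : D E₄ z =
    (EisensteinSeries.E2 z * E₄ z - E₆ z) / 3 := by
  have h := eq_zero_of_slash_invariant (k := 6) (by norm_num)
    (f := Derivative.serreDerivative (4 : ℤ) E₄ +
      (3⁻¹ : ℂ) • ⇑E₆)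
    ((Derivative.serreDerivative_mdifferentiable _ E₄.holo').add
      (E₆.holo'.const_smul _))
    (fun γ ↦ by
      rw [SlashAction.add_slash, ModularForm.SL_smul_slash, E6_slash]
      congr 1
      exact Derivative.serreDerivative_slash_invariant E₄.holo' (E4_slash γ))
    (by
      convert! (tendsto_E4.2.sub ((tendsto_E2.1.const_mul (((4 : ℤ) : ℂ) * 12⁻¹)).mul
        tendsto_E4.1)).add (tendsto_E6.1.const_mul 3⁻¹) using 2
      norm_num)
  have hz := congrFun h z
  simp only [Pi.add_apply, Pi.smul_apply, smul_eq_mul, Derivative.serreDerivative_apply,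
    Pi.zero_apply] at hz
  push_cast at hz
  linear_combination hz

/-- Ramanujan's identity for `D E₆`, from the Serre derivative of `E₆`. -/
theorem D_E6 (z : ℍ) : D E₆ z =
    (EisensteinSeries.E2 z * E₆ z - E₄ z ^ 2) / 2 := by
  have h := eq_zero_of_slash_invariant (k := 8) (by norm_num)
    (f := Derivative.serreDerivative (6 : ℤ) E₆ +
      (2⁻¹ : ℂ) • (⇑E₄ * ⇑E₄))
    ((Derivative.serreDerivative_mdifferentiable _ E₆.holo').add
      ((E₄.holo'.mul E₄.holo').const_smul _))
    (fun γ ↦ by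
      have h8 : (⇑E₄ * ⇑E₄) ∣[(8 : ℤ)] γ = ⇑E₄ * ⇑E₄ := by
        have h44 := ModularForm.mul_slash_SL2 4 4 γ E₄ E₄
        rwa [E4_slash] at h44
      rw [SlashAction.add_slash, ModularForm.SL_smul_slash, h8]
      congr 1
      exact Derivative.serreDerivative_slash_invariant E₆.holo' (E6_slash γ))
    (by
      convert! (tendsto_E6.2.sub ((tendsto_E2.1.const_mul (((6 : ℤ) : ℂ) * 12⁻¹)).mul
        tendsto_E6.1)).add ((tendsto_E4.1.mul tendsto_E4.1).const_mul 2⁻¹) using 2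
      norm_num)
  have hz := congrFun h z
  simp only [Pi.add_apply, Pi.smul_apply, Pi.mul_apply, smul_eq_mul,
    Derivative.serreDerivative_apply, Pi.zero_apply] at hz
  push_cast at hz
  linear_combination hz

/-! ### Derivatives of `E2`, `E4`, `E6` and of `p` -/

/-- Passage from the normalized derivative `D F = (2πi)⁻¹ F'` of a function on `ℍ` to the complex
derivative of a function on `ℂ` that agrees with `F` on the upper half-plane. -/
theorem hasDerivAt_of_D {F : ℍ → ℂ} (hF : MDiff F) {f : ℂ → ℂ}
    (hf : ∀ z : ℍ, f z = F z) (z : ℍ) : HasDerivAt f (2 * π * I * D F z) z := by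
  have hev : f =ᶠ[𝓝 (z : ℂ)] F ∘ ofComplex := by
    filter_upwards [isOpen_upperHalfPlaneSet.mem_nhds z.im_pos] with w hw
    simpa [ofComplex_apply_of_im_pos hw] using hf ⟨w, hw⟩
  have hpi : (π : ℂ) ≠ 0 := by exact_mod_cast Real.pi_ne_zero
  convert! (UpperHalfPlane.mdifferentiableAt_iff.mp (hF z)).hasDerivAt.congr_of_eventuallyEq hev
    using 1
  rw [Derivative.normalizedDerivOfComplex]
  field_simp

theorem hasDerivAt_E2 {τ : ℂ} (hτ : 0 < τ.im) :
    HasDerivAt E2 (2 * π * I * ((E2 τ ^ 2 - E4 τ) / 12)) τ := by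
  have h := hasDerivAt_of_D E2_mdifferentiable (f := E2) (fun z ↦ (eisE2_eq z).symm) ⟨τ, hτ⟩
  rwa [D_E2, eisE2_eq, eisE4_eq] at h

theorem hasDerivAt_E4 {τ : ℂ} (hτ : 0 < τ.im) :
    HasDerivAt E4 (2 * π * I * ((E2 τ * E4 τ - E6 τ) / 3)) τ := by
  have h := hasDerivAt_of_D E₄.holo' (f := E4)
    (fun z ↦ (eisE4_eq z).symm) ⟨τ, hτ⟩
  erw [D_E4] at h
  rwa [eisE2_eq, eisE4_eq, eisE6_eq] at h

theorem hasDerivAt_E6 {τ : ℂ} (hτ : 0 < τ.im) :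
    HasDerivAt E6 (2 * π * I * ((E2 τ * E6 τ - E4 τ ^ 2) / 2)) τ := by
  have h := hasDerivAt_of_D E₆.holo' (f := E6)
    (fun z ↦ (eisE6_eq z).symm) ⟨τ, hτ⟩
  erw [D_E6] at h
  rwa [eisE2_eq, eisE4_eq, eisE6_eq] at h

/-- The closed form `p' = E₄ / E₂²`. -/
theorem hasDerivAt_pfun {τ : ℂ} (hτ : 0 < τ.im) (hE2 : E2 τ ≠ 0) :
    HasDerivAt pfun (E4 τ / E2 τ ^ 2) τ := by
  have hpi : (π : ℂ) ≠ 0 := by exact_mod_cast Real.pi_ne_zero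
  convert! (hasDerivAt_id τ).sub ((hasDerivAt_const τ (6 * I)).div
    ((hasDerivAt_E2 hτ).const_mul (π : ℂ)) (mul_ne_zero hpi hE2)) using 1
  field_simp
  ring_nf
  simp only [I_sq]
  ring

/-- The closed form of `p''`, obtained by differentiating `E₄ / E₂²`. -/
theorem hasDerivAt_pfun_deriv {τ : ℂ} (hτ : 0 < τ.im) (hE2 : E2 τ ≠ 0) :
    HasDerivAt (fun w ↦ E4 w / E2 w ^ 2)
      (π * I / 3 * ((E2 τ ^ 2 * E4 τ - 2 * E2 τ * E6 τ + E4 τ ^ 2) / E2 τ ^ 3)) τ := by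
  convert! (hasDerivAt_E4 hτ).div ((hasDerivAt_E2 hτ).pow 2) (pow_ne_zero 2 hE2) using 1
  simp only [Pi.pow_apply]
  field_simp
  push_cast
  ring

/-- The Schwarzian derivative of `p`: `{p, τ} = -1152 π² Δ / E₄²`. -/
theorem schwarzian_of_p (τ : ℂ) (hτ : 0 < τ.im) (hE2 : E2 τ ≠ 0) (hE4 : E4 τ ≠ 0) :
    (2 * deriv pfun τ * deriv (deriv (deriv pfun)) τ
        - 3 * deriv (deriv pfun) τ ^ 2) / (2 * deriv pfun τ ^ 2)
      = -1152 * (Real.pi : ℂ) ^ 2 * Δfun τ / E4 τ ^ 2 := by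
  have hev : ∀ᶠ w in 𝓝 τ, 0 < w.im ∧ E2 w ≠ 0 :=
    (Filter.Eventually.and (isOpen_upperHalfPlaneSet.mem_nhds hτ)
      ((hasDerivAt_E2 hτ).continuousAt.eventually_ne hE2))
  have h1 : deriv pfun =ᶠ[𝓝 τ] fun w ↦ E4 w / E2 w ^ 2 :=
    hev.mono fun w hw ↦ (hasDerivAt_pfun hw.1 hw.2).deriv
  have h2 : deriv (deriv pfun) =ᶠ[𝓝 τ] fun w ↦ π * I / 3 *
      ((E2 w ^ 2 * E4 w - 2 * E2 w * E6 w + E4 w ^ 2) / E2 w ^ 3) :=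
    h1.deriv.trans (hev.mono fun w hw ↦ (hasDerivAt_pfun_deriv hw.1 hw.2).deriv)
  have e2 := hasDerivAt_E2 hτ
  have e4 := hasDerivAt_E4 hτ
  have e6 := hasDerivAt_E6 hτ
  have h3 := ((((((e2.pow 2).mul e4).sub ((e2.const_mul 2).mul e6)).add (e4.pow 2)).div
    (e2.pow 3) (pow_ne_zero 3 hE2)).const_mul (π * I / 3)).deriv
  have h4 : deriv (deriv (deriv pfun)) τ = _ := h2.deriv_eq.trans h3
  rw [h4, h2.eq_of_nhds, h1.eq_of_nhds, Δfun]
  simp only [Pi.pow_apply, Pi.mul_apply, Pi.sub_apply, Pi.add_apply]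
  field_simp
  ring_nf
  simp only [I_sq]
  ring
end
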